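/- arXiv:2309.16605 — 3 statements merged into one kernel-verified Lean document; each statement's English description precedes it below -/
import Mathlib

section
/- Let X and U be Hausdorff topological spaces, V a topological space, and let f : U → X and g : V → U be continuous open embeddings. Then the Pontryagin–Thom collapse maps compose contravariantly: the collapse map OnePoint X → OnePoint V associated to the open embedding f ∘ g : V → X equals the composite of the collapse map OnePoint X → OnePoint U associated to f followed by the collapse map OnePoint U → OnePoint V associated to g. -/
/-- Pontryagin–Thom collapse maps of one-point compactifications compose
contravariantly: the collapse map of `f ∘ g` is the collapse map of `g`
composed with the collapse map of `f`. Each collapse map is characterized by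
sending points in the image of the embedding back to their (unique) preimage
and all other points (including `∞`) to `∞`. -/
theorem collapse_comp {X U V : Type*} [TopologicalSpace X] [TopologicalSpace U]
    [TopologicalSpace V] [T2Space X] [T2Space U]
    (f : U → X) (hf : Topology.IsOpenEmbedding f)
    (g : V → U) (hg : Topology.IsOpenEmbedding g)
    (cf : OnePoint X → OnePoint U)
    (hcf_mem : ∀ u : U, cf ((f u : X) : OnePoint X) = (u : OnePoint U))
    (hcf_not : ∀ x : X, (∀ u : U, x ≠ f u) → cf (x : OnePoint X) = OnePoint.infty)
    (hcf_infty : cf OnePoint.infty = OnePoint.infty)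
    (cg : OnePoint U → OnePoint V)
    (hcg_mem : ∀ v : V, cg ((g v : U) : OnePoint U) = (v : OnePoint V))
    (hcg_not : ∀ u : U, (∀ v : V, u ≠ g v) → cg (u : OnePoint U) = OnePoint.infty)
    (hcg_infty : cg OnePoint.infty = OnePoint.infty)
    (cfg : OnePoint X → OnePoint V)
    (hcfg_mem : ∀ v : V, cfg ((f (g v) : X) : OnePoint X) = (v : OnePoint V))
    (hcfg_not : ∀ x : X, (∀ v : V, x ≠ f (g v)) → cfg (x : OnePoint X) = OnePoint.infty)
    (hcfg_infty : cfg OnePoint.infty = OnePoint.infty) :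
    cfg = cg ∘ cf := by
  funext p
  induction p using OnePoint.rec with
  | infty => rw [Function.comp_apply, hcf_infty, hcg_infty, hcfg_infty]
  | coe x =>
    rw [Function.comp_apply]
    by_cases hx : ∃ u, x = f u
    · obtain ⟨u, rfl⟩ := hx
      rw [hcf_mem]
      by_cases hu : ∃ v, u = g v
      · obtain ⟨v, rfl⟩ := hu
        rw [hcg_mem, hcfg_mem]
      · have hu2 : ∀ v, u ≠ g v := fun v h => hu ⟨v, h⟩
        rw [hcg_not u hu2, hcfg_not (f u) (fun v h => hu2 v (hf.injective h))]
    · rw [hcf_not x (fun u h => hx ⟨u, h⟩), hcg_infty,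
        hcfg_not x (fun v h => hx ⟨g v, h⟩)]
end

section
/- Let M and N be topological spaces and k a natural number. There is a homeomorphism between the ordered configuration space Conf(M ⊕ N, k) of k labeled points in the disjoint union (sum) of M and N, and the disjoint sum, indexed over all subsets S ⊆ Fin k (S : Finset (Fin k)), of the product spaces Conf_S(M) × Conf_{Sᶜ}(N), where Conf_S(M) denotes the subspace of S → M (product topology, S viewed as a subtype) consisting of injective functions; the homeomorphism sends a configuration f : Fin k → M ⊕ N to the pair of its restrictions to the set S of labels landing in M and its complement Sᶜ of labels landing in N. -/
/-- Glue an `S`-configuration in `M` and an `Sᶜ`-configuration in `N`. -/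
def confGlue (M N : Type*) (k : ℕ) (x : (S : Finset (Fin k)) ×
          ({g : S → M // Function.Injective g} ×
            {g : (Sᶜ : Finset (Fin k)) → N // Function.Injective g})) :
    {f : Fin k → M ⊕ N // Function.Injective f} :=
  ⟨fun i => if h : i ∈ x.1 then Sum.inl (x.2.1.1 ⟨i, h⟩)
      else Sum.inr (x.2.2.1 ⟨i, Finset.mem_compl.2 h⟩), by
    intro i j hij
    dsimp only at hij
    split_ifs at hij with h1 h2 h2
    · exact congrArg Subtype.val (x.2.1.2 (Sum.inl.inj hij))
    · exact congrArg Subtype.val (x.2.2.2 (Sum.inr.inj hij))⟩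

theorem confGlue_pos {M N : Type*} {k : ℕ} (x : (S : Finset (Fin k)) ×
          ({g : S → M // Function.Injective g} ×
            {g : (Sᶜ : Finset (Fin k)) → N // Function.Injective g}))
    (i : Fin k) (h : i ∈ x.1) :
    (confGlue M N k x).1 i = Sum.inl (x.2.1.1 ⟨i, h⟩) := dif_pos h

theorem confGlue_neg {M N : Type*} {k : ℕ} (x : (S : Finset (Fin k)) ×
          ({g : S → M // Function.Injective g} ×
            {g : (Sᶜ : Finset (Fin k)) → N // Function.Injective g}))
    (i : Fin k) (h : i ∉ x.1) :
    (confGlue M N k x).1 i = Sum.inr (x.2.2.1 ⟨i, Finset.mem_compl.2 h⟩) := dif_neg h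

theorem confGlue_mem {M N : Type*} {k : ℕ} (x : (S : Finset (Fin k)) ×
          ({g : S → M // Function.Injective g} ×
            {g : (Sᶜ : Finset (Fin k)) → N // Function.Injective g})) (i : Fin k) :
    ((confGlue M N k x).1 i).isLeft ↔ i ∈ x.1 := by
  by_cases h : i ∈ x.1
  · simp [confGlue_pos x i h, h]
  · simp [confGlue_neg x i h, h]

theorem confGlue_injective (M N : Type*) (k : ℕ) : Function.Injective (confGlue M N k) := by
  intro x y hxy
  have hS : x.1 = y.1 := by
    ext i
    rw [← confGlue_mem, ← confGlue_mem, hxy]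
  obtain ⟨S, a, b⟩ := x
  obtain ⟨T, c, d⟩ := y
  dsimp only at hS
  subst hS
  have e : a = c := by
    apply Subtype.ext
    funext i
    have h := congrArg (fun f => f.1 i.1) hxy
    rw [confGlue_pos _ _ i.2, confGlue_pos _ _ i.2] at h
    exact Sum.inl.inj h
  have e' : b = d := by
    apply Subtype.ext
    funext i
    have hi := Finset.mem_compl.1 i.2
    have h := congrArg (fun f => f.1 i.1) hxy
    rw [confGlue_neg _ _ hi, confGlue_neg _ _ hi] at h
    exact Sum.inr.inj h
  rw [e, e']

theorem confGlue_continuous (M N : Type*) [TopologicalSpace M] [TopologicalSpace N] (k : ℕ) :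
    Continuous (confGlue M N k) := by
  refine continuous_sigma fun S => ?_
  refine Continuous.subtype_mk (continuous_pi fun i => ?_) _
  by_cases h : i ∈ S
  · simp only [h, dite_true]
    exact continuous_inl.comp ((continuous_apply (⟨i, h⟩ : S)).comp (continuous_subtype_val.comp continuous_fst))
  · simp only [h, dite_false]
    exact continuous_inr.comp ((continuous_apply
      (⟨i, Finset.mem_compl.2 h⟩ : (Sᶜ : Finset (Fin k)))).comp (continuous_subtype_val.comp continuous_snd))

/-- The configurations whose set of labels landing in `M` is `S`. -/
def confPiece (M N : Type*) (k : ℕ) (S : Finset (Fin k)) :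
    Set {f : Fin k → M ⊕ N // Function.Injective f} :=
  {f | ∀ i, (f.1 i).isLeft ↔ i ∈ S}

theorem confPiece_isOpen (M N : Type*) [TopologicalSpace M] [TopologicalSpace N] (k : ℕ)
    (S : Finset (Fin k)) : IsOpen (confPiece M N k S) := by
  have hc : Continuous (Sum.isLeft : M ⊕ N → Bool) :=
    continuous_sum_dom.2 ⟨continuous_const, continuous_const⟩
  rw [confPiece, Set.ofPred_forall]
  refine isOpen_iInter_of_finite fun i => ?_
  exact (isOpen_discrete {b : Bool | b ↔ i ∈ S}).preimage
    (hc.comp ((continuous_apply i).comp continuous_subtype_val))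

theorem confPiece_section (M N : Type*) [TopologicalSpace M] [TopologicalSpace N] (k : ℕ)
    (S : Finset (Fin k)) :
    ∃ r : confPiece M N k S → ({g : S → M // Function.Injective g} ×
            {g : (Sᶜ : Finset (Fin k)) → N // Function.Injective g}),
      Continuous r ∧ ∀ f, confGlue M N k ⟨S, r f⟩ = f.1 := by
  have hl : ∀ (f : confPiece M N k S) (i : S), ∃ m : M, Sum.inl m = f.1.1 i := by
    intro f i
    obtain ⟨m, hm⟩ := Sum.isLeft_iff.1 ((f.2 i).2 i.2)
    exact ⟨m, hm.symm⟩
  have hr : ∀ (f : confPiece M N k S) (i : (Sᶜ : Finset (Fin k))),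
      ∃ n : N, Sum.inr n = f.1.1 i := by
    intro f i
    rcases h : f.1.1 i with m | n
    · exact absurd ((f.2 i).1 (by simp [h])) (Finset.mem_compl.1 i.2)
    · exact ⟨n, rfl⟩
  choose a ha using hl
  choose b hb using hr
  refine ⟨fun f => (⟨a f, fun i j hij => ?_⟩, ⟨b f, fun i j hij => ?_⟩), ?_, ?_⟩
  · exact Subtype.ext (f.1.2 (by rw [← ha, ← ha, hij]))
  · exact Subtype.ext (f.1.2 (by rw [← hb, ← hb, hij]))
  · refine Continuous.prodMk (Continuous.subtype_mk (continuous_pi fun i => ?_) _)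
      (Continuous.subtype_mk (continuous_pi fun i => ?_) _)
    · rw [Topology.IsOpenEmbedding.inl (Y := N).isInducing.continuous_iff]
      have : (Sum.inl ∘ fun f => a f i : confPiece M N k S → M ⊕ N) = fun f => f.1.1 i :=
        funext fun f => ha f i
      rw [this]
      exact (continuous_apply i.1).comp (continuous_subtype_val.comp continuous_subtype_val)
    · rw [Topology.IsOpenEmbedding.inr (X := M).isInducing.continuous_iff]
      have : (Sum.inr ∘ fun f => b f i : confPiece M N k S → M ⊕ N) = fun f => f.1.1 i :=
        funext fun f => hb f i
      rw [this]
      exact (continuous_apply i.1).comp (continuous_subtype_val.comp continuous_subtype_val)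
  · intro f
    apply Subtype.ext
    funext i
    by_cases h : i ∈ S
    · rw [confGlue_pos _ _ h]
      exact ha f ⟨i, h⟩
    · rw [confGlue_neg _ _ h]
      exact hb f ⟨i, Finset.mem_compl.2 h⟩

/-- The ordered configuration space of `k` labeled points in a disjoint union
`M ⊕ N` is homeomorphic to the disjoint sum, over all subsets `S` of the labels,
of the products of the `S`-labeled configuration space of `M` with the
`Sᶜ`-labeled configuration space of `N`; the homeomorphism restricts a
configuration to the labels landing in `M` and those landing in `N`. -/
theorem conf_sum_homeomorph (M N : Type*) [TopologicalSpace M] [TopologicalSpace N]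
    (k : ℕ) :
    ∃ h : {f : Fin k → M ⊕ N // Function.Injective f} ≃ₜ
        (S : Finset (Fin k)) ×
          ({g : S → M // Function.Injective g} ×
            {g : (Sᶜ : Finset (Fin k)) → N // Function.Injective g}),
      ∀ f : {f : Fin k → M ⊕ N // Function.Injective f},
        (h f).1 = Finset.univ.filter (fun i => (f.1 i).isLeft) ∧
        (∀ i : ((h f).1 : Finset (Fin k)), Sum.inl ((h f).2.1.1 i) = f.1 i) ∧
        (∀ i : (((h f).1)ᶜ : Finset (Fin k)), Sum.inr ((h f).2.2.1 i) = f.1 i) := by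
  have hmem : ∀ f : {f : Fin k → M ⊕ N // Function.Injective f},
      f ∈ confPiece M N k (Finset.univ.filter (fun i => (f.1 i).isLeft)) := by
    intro f i
    simp
  have hsurj : Function.Surjective (confGlue M N k) := by
    intro f
    obtain ⟨r, -, hr⟩ := confPiece_section M N k (Finset.univ.filter (fun i => (f.1 i).isLeft))
    exact ⟨_, hr ⟨f, hmem f⟩⟩
  let e := Equiv.ofBijective (confGlue M N k) ⟨confGlue_injective M N k, hsurj⟩
  have he : Continuous e.symm := by
    rw [continuous_iff_continuousAt]
    intro f
    obtain ⟨r, hrc, hr⟩ := confPiece_section M N k (Finset.univ.filter (fun i => (f.1 i).isLeft))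
    refine ContinuousOn.continuousAt ?_ ((confPiece_isOpen M N k _).mem_nhds (hmem f))
    rw [continuousOn_iff_continuous_domRestrict]
    have : Set.domRestrict (confPiece M N k (Finset.univ.filter (fun i => (f.1 i).isLeft))) e.symm
        = fun f => ⟨_, r f⟩ := by
      funext f'
      rw [Set.domRestrict_apply, Equiv.symm_apply_eq]
      exact (hr f').symm
    rw [this]
    exact continuous_sigmaMk.comp hrc
  refine ⟨⟨e.symm, he, confGlue_continuous M N k⟩, fun f => ?_⟩
  obtain ⟨x, rfl⟩ := e.surjective f
  have hx : (Homeomorph.mk e.symm he (confGlue_continuous M N k)) (e x) = x :=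
    e.symm_apply_apply x
  rw [hx]
  refine ⟨?_, fun i => ?_, fun i => ?_⟩
  · ext i
    simp only [Finset.mem_filter, Finset.mem_univ, true_and]
    exact (confGlue_mem x i).symm
  · exact (confGlue_pos x i i.2).symm
  · exact (confGlue_neg x i (Finset.mem_compl.1 i.2)).symm
end

section
/- Fix natural numbers n and k. Let D(n, k) be the space of configurations of k labeled disjoint open round disks in the open unit disk: the subspace of Fin k → (EuclideanSpace ℝ (Fin n)) × ℝ consisting of those (c, r) such that for every i, 0 < r i and Metric.ball (c i) (r i) ⊆ Metric.ball 0 1, and for all i ≠ j the balls Metric.ball (c i) (r i) and Metric.ball (c j) (r j) are disjoint. Then the 'centers' map D(n, k) → Conf(Metric.ball (0 : EuclideanSpace ℝ (Fin n)) 1, k), sending (c, r) to the injective function i ↦ c i, is a homotopy equivalence: there exists a continuous map in the other direction such that both composites are homotopic to the respective identity maps. -/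
open unitInterval in
lemma shrink_homotopic (n k : ℕ)
    {X : Type*} [TopologicalSpace X]
    (A B : C(X, {p : Fin k → (EuclideanSpace ℝ (Fin n)) × ℝ //
          (∀ i, 0 < (p i).2 ∧ Metric.ball (p i).1 (p i).2 ⊆
            Metric.ball (0 : EuclideanSpace ℝ (Fin n)) 1) ∧
          (∀ i j, i ≠ j →
            Disjoint (Metric.ball (p i).1 (p i).2) (Metric.ball (p j).1 (p j).2))}))
    (hc : ∀ x i, ((B x).1 i).1 = ((A x).1 i).1)
    (hr : ∀ x i, ((B x).1 i).2 ≤ ((A x).1 i).2) : A.Homotopic B := by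
  have hle : ∀ (t : I) x i,
      (1 - (t : ℝ)) * ((A x).1 i).2 + t * ((B x).1 i).2 ≤ ((A x).1 i).2 := by
    intro t x i
    nlinarith [hr x i, t.2.1]
  have hge : ∀ (t : I) x i,
      ((B x).1 i).2 ≤ (1 - (t : ℝ)) * ((A x).1 i).2 + t * ((B x).1 i).2 := by
    intro t x i
    nlinarith [hr x i, t.2.2]
  refine ⟨⟨⟨fun q => ⟨fun i => (((A q.2).1 i).1,
      (1 - (q.1 : ℝ)) * ((A q.2).1 i).2 + q.1 * ((B q.2).1 i).2), ?_, ?_⟩, ?_⟩, ?_, ?_⟩⟩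
  · intro i
    exact ⟨((B q.2).2.1 i).1.trans_le (hge q.1 q.2 i),
      (Metric.ball_subset_ball (hle q.1 q.2 i)).trans ((A q.2).2.1 i).2⟩
  · intro i j hij
    exact ((A q.2).2.2 i j hij).mono (Metric.ball_subset_ball (hle q.1 q.2 i))
      (Metric.ball_subset_ball (hle q.1 q.2 j))
  · refine Continuous.subtype_mk (continuous_pi fun i => ?_) _
    have hA : Continuous fun q : I × X => (A q.2).1 i :=
      (continuous_apply i).comp (continuous_subtype_val.comp (A.continuous.comp continuous_snd))
    have hB : Continuous fun q : I × X => (B q.2).1 i :=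
      (continuous_apply i).comp (continuous_subtype_val.comp (B.continuous.comp continuous_snd))
    have ht : Continuous fun q : I × X => (q.1 : ℝ) := continuous_subtype_val.comp continuous_fst
    exact hA.fst.prodMk (((continuous_const.sub ht).mul hA.snd).add (ht.mul hB.snd))
  · intro x
    apply Subtype.ext
    funext i
    apply Prod.ext <;> simp
  · intro x
    apply Subtype.ext
    funext i
    apply Prod.ext <;> simp [hc]

/-- A canonical admissible radius for the `i`-th point of a configuration. -/
noncomputable def canonRadius {n k : ℕ} (c : Fin k → EuclideanSpace ℝ (Fin n)) (i : Fin k) : ℝ :=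
  (1 - ‖c i‖) * ∏ j, if j = i then 1 else min 1 (dist (c i) (c j) / 2)

lemma canonRadius_continuous {n k : ℕ} (i : Fin k) :
    Continuous fun c : Fin k → EuclideanSpace ℝ (Fin n) => canonRadius c i := by
  unfold canonRadius
  refine Continuous.mul (by fun_prop) (continuous_finset_prod _ fun j _ => ?_)
  split_ifs <;> fun_prop

section
variable {n k : ℕ} {c : Fin k → EuclideanSpace ℝ (Fin n)}

lemma canonFactor_nonneg (i j : Fin k) :
    0 ≤ if j = i then (1 : ℝ) else min 1 (dist (c i) (c j) / 2) := by
  split_ifs <;> positivity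

lemma canonFactor_le_one (i j : Fin k) :
    (if j = i then (1 : ℝ) else min 1 (dist (c i) (c j) / 2)) ≤ 1 := by
  split_ifs <;> simp

lemma canonRadius_pos (h1 : ∀ i, ‖c i‖ < 1) (hinj : Function.Injective c) (i : Fin k) :
    0 < canonRadius c i := by
  refine mul_pos (by linarith [h1 i]) (Finset.prod_pos fun j _ => ?_)
  split_ifs with h
  · exact one_pos
  · have : 0 < dist (c i) (c j) := dist_pos.2 fun e => h (hinj e).symm
    positivity

lemma canonRadius_le (h1 : ∀ i, ‖c i‖ < 1) (i : Fin k) : canonRadius c i ≤ 1 - ‖c i‖ :=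
  mul_le_of_le_one_right (by linarith [h1 i])
    (Finset.prod_le_one (fun j _ => canonFactor_nonneg i j) (fun j _ => canonFactor_le_one i j))

lemma canonRadius_le_dist (i j : Fin k) (hij : i ≠ j) :
    canonRadius c i ≤ dist (c i) (c j) / 2 := by
  have hP0 : 0 ≤ ∏ j, if j = i then (1 : ℝ) else min 1 (dist (c i) (c j) / 2) :=
    Finset.prod_nonneg fun j _ => canonFactor_nonneg i j
  have h2 : canonRadius c i ≤ ∏ j, if j = i then (1 : ℝ) else min 1 (dist (c i) (c j) / 2) :=
    mul_le_of_le_one_left hP0 (by linarith [norm_nonneg (c i)])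
  refine h2.trans ?_
  rw [← Finset.mul_prod_erase _ _ (Finset.mem_univ j)]
  refine (mul_le_of_le_one_right (canonFactor_nonneg i j)
    (Finset.prod_le_one (fun j _ => canonFactor_nonneg i j)
      (fun j _ => canonFactor_le_one i j))).trans ?_
  rw [if_neg hij.symm]
  exact min_le_right _ _

lemma canonRadius_ball (h1 : ∀ i, ‖c i‖ < 1) (i : Fin k) :
    Metric.ball (c i) (canonRadius c i) ⊆ Metric.ball 0 1 := by
  apply Metric.ball_subset_ball'
  rw [dist_zero_right]
  linarith [canonRadius_le h1 i]

lemma canonRadius_disjoint (i j : Fin k) (hij : i ≠ j) :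
    Disjoint (Metric.ball (c i) (canonRadius c i)) (Metric.ball (c j) (canonRadius c j)) := by
  apply Metric.ball_disjoint_ball
  have h1 := canonRadius_le_dist (c := c) i j hij
  have h2 := canonRadius_le_dist (c := c) j i hij.symm
  rw [dist_comm] at h2
  linarith

end

/-- The "centers" map, from the space `D(n,k)` of configurations of `k` labeled
disjoint open round disks in the open unit disk of `ℝⁿ` to the ordered
configuration space of `k` points in the open unit ball, is a homotopy
equivalence: it is continuous, and there is a continuous map in the other
direction such that both composites are homotopic to the identity. -/
theorem centers_map_homotopyEquiv (n k : ℕ) :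
    ∃ F : C({p : Fin k → (EuclideanSpace ℝ (Fin n)) × ℝ //
          (∀ i, 0 < (p i).2 ∧ Metric.ball (p i).1 (p i).2 ⊆
            Metric.ball (0 : EuclideanSpace ℝ (Fin n)) 1) ∧
          (∀ i j, i ≠ j →
            Disjoint (Metric.ball (p i).1 (p i).2) (Metric.ball (p j).1 (p j).2))},
        {g : Fin k → (Metric.ball (0 : EuclideanSpace ℝ (Fin n)) 1) //
          Function.Injective g}),
      (∀ p, ∀ i, (((F p).1 i : EuclideanSpace ℝ (Fin n)) = (p.1 i).1)) ∧
      ∃ G, (F.comp G).Homotopic (ContinuousMap.id _) ∧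
        (G.comp F).Homotopic (ContinuousMap.id _) := by
  have hmem : ∀ p : {p : Fin k → (EuclideanSpace ℝ (Fin n)) × ℝ //
          (∀ i, 0 < (p i).2 ∧ Metric.ball (p i).1 (p i).2 ⊆
            Metric.ball (0 : EuclideanSpace ℝ (Fin n)) 1) ∧
          (∀ i j, i ≠ j →
            Disjoint (Metric.ball (p i).1 (p i).2) (Metric.ball (p j).1 (p j).2))},
      ∀ i, (p.1 i).1 ∈ Metric.ball (0 : EuclideanSpace ℝ (Fin n)) 1 := fun p i =>
    (p.2.1 i).2 (Metric.mem_ball_self (p.2.1 i).1)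
  have hinj : ∀ p : {p : Fin k → (EuclideanSpace ℝ (Fin n)) × ℝ //
          (∀ i, 0 < (p i).2 ∧ Metric.ball (p i).1 (p i).2 ⊆
            Metric.ball (0 : EuclideanSpace ℝ (Fin n)) 1) ∧
          (∀ i j, i ≠ j →
            Disjoint (Metric.ball (p i).1 (p i).2) (Metric.ball (p j).1 (p j).2))},
      Function.Injective fun i => (p.1 i).1 := by
    intro p i j h
    by_contra hij
    refine Set.disjoint_left.1 (p.2.2 i j hij) (Metric.mem_ball_self (p.2.1 i).1) ?_
    have h' : (p.1 i).1 = (p.1 j).1 := h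
    rw [h']
    exact Metric.mem_ball_self (p.2.1 j).1
  let F : C({p : Fin k → (EuclideanSpace ℝ (Fin n)) × ℝ //
          (∀ i, 0 < (p i).2 ∧ Metric.ball (p i).1 (p i).2 ⊆
            Metric.ball (0 : EuclideanSpace ℝ (Fin n)) 1) ∧
          (∀ i j, i ≠ j →
            Disjoint (Metric.ball (p i).1 (p i).2) (Metric.ball (p j).1 (p j).2))},
        {g : Fin k → (Metric.ball (0 : EuclideanSpace ℝ (Fin n)) 1) //
          Function.Injective g}) :=
    ⟨fun p => ⟨fun i => ⟨(p.1 i).1, hmem p i⟩,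
        fun i j h => hinj p (congrArg Subtype.val h)⟩,
      Continuous.subtype_mk (continuous_pi fun i => Continuous.subtype_mk
        ((continuous_apply i).comp continuous_subtype_val).fst _) _⟩
  have hn : ∀ g : {g : Fin k → (Metric.ball (0 : EuclideanSpace ℝ (Fin n)) 1) //
          Function.Injective g}, ∀ i, ‖(g.1 i : EuclideanSpace ℝ (Fin n))‖ < 1 := fun g i =>
    mem_ball_zero_iff.1 (g.1 i).2
  have hcg : Continuous fun g : {g : Fin k → (Metric.ball (0 : EuclideanSpace ℝ (Fin n)) 1) //
          Function.Injective g} => fun i => (g.1 i : EuclideanSpace ℝ (Fin n)) :=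
    continuous_pi fun i => continuous_subtype_val.comp
      ((continuous_apply i).comp continuous_subtype_val)
  let G : C({g : Fin k → (Metric.ball (0 : EuclideanSpace ℝ (Fin n)) 1) //
          Function.Injective g},
      {p : Fin k → (EuclideanSpace ℝ (Fin n)) × ℝ //
          (∀ i, 0 < (p i).2 ∧ Metric.ball (p i).1 (p i).2 ⊆
            Metric.ball (0 : EuclideanSpace ℝ (Fin n)) 1) ∧
          (∀ i j, i ≠ j →
            Disjoint (Metric.ball (p i).1 (p i).2) (Metric.ball (p j).1 (p j).2))}) :=
    ⟨fun g => ⟨fun i => ((g.1 i : EuclideanSpace ℝ (Fin n)),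
          canonRadius (fun i => (g.1 i : EuclideanSpace ℝ (Fin n))) i),
        fun i => ⟨canonRadius_pos (hn g) (Subtype.val_injective.comp g.2) i,
          canonRadius_ball (c := fun i => (g.1 i : EuclideanSpace ℝ (Fin n))) (hn g) i⟩,
        fun i j hij =>
          canonRadius_disjoint (c := fun i => (g.1 i : EuclideanSpace ℝ (Fin n))) i j hij⟩,
      Continuous.subtype_mk (continuous_pi fun i =>
        ((continuous_apply i).comp hcg).prodMk ((canonRadius_continuous i).comp hcg)) _⟩
  -- the intermediate map: replace each radius by its minimum with the canonical one
  let M : C({p : Fin k → (EuclideanSpace ℝ (Fin n)) × ℝ //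
          (∀ i, 0 < (p i).2 ∧ Metric.ball (p i).1 (p i).2 ⊆
            Metric.ball (0 : EuclideanSpace ℝ (Fin n)) 1) ∧
          (∀ i j, i ≠ j →
            Disjoint (Metric.ball (p i).1 (p i).2) (Metric.ball (p j).1 (p j).2))},
      {p : Fin k → (EuclideanSpace ℝ (Fin n)) × ℝ //
          (∀ i, 0 < (p i).2 ∧ Metric.ball (p i).1 (p i).2 ⊆
            Metric.ball (0 : EuclideanSpace ℝ (Fin n)) 1) ∧
          (∀ i j, i ≠ j →
            Disjoint (Metric.ball (p i).1 (p i).2) (Metric.ball (p j).1 (p j).2))}) :=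
    ⟨fun p => ⟨fun i => ((p.1 i).1, min (p.1 i).2 ((G (F p)).1 i).2),
        fun i => ⟨lt_min (p.2.1 i).1 ((G (F p)).2.1 i).1,
          (Metric.ball_subset_ball (min_le_left _ _)).trans (p.2.1 i).2⟩,
        fun i j hij => (p.2.2 i j hij).mono (Metric.ball_subset_ball (min_le_left _ _))
          (Metric.ball_subset_ball (min_le_left _ _))⟩,
      Continuous.subtype_mk (continuous_pi fun i =>
        ((continuous_apply i).comp continuous_subtype_val).fst.prodMk
          (((continuous_apply i).comp continuous_subtype_val).snd.min
            ((continuous_apply i).comp (continuous_subtype_val.comp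
              (G.continuous.comp F.continuous))).snd)) _⟩
  refine ⟨F, fun p i => rfl, G, ?_, ?_⟩
  · have : F.comp G = ContinuousMap.id _ := by
      ext g : 1
      rfl
    rw [this]
  · exact (shrink_homotopic n k (G.comp F) M (fun _ _ => rfl)
      (fun _ _ => min_le_right _ _)).trans
      (shrink_homotopic n k (ContinuousMap.id _) M (fun _ _ => rfl)
      (fun _ _ => min_le_left _ _)).symm
end
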